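/- Let G be a finite simple connected graph with no induced subgraph isomorphic to a hole, the domino D, the graph F, or the graph X5. Then for every pair of non-adjacent vertices u, v, every induced uv-path of length at least 3 dominates every shortest uv-path. -/

import Mathlib

/-!
Suppose an internal vertex `x` of a geodesic `P` is neither on the induced path `W` nor adjacent to
an internal vertex of `W`, and let `a`, `b` be its neighbours on `P`. Among the vertices of `W` and
`P` other than `x`, the only neighbours of `x` are `a` and `b`. As `G` has no holes, every walk from
`a` to `b` through such vertices contains a common neighbour of `a` and `b`; hence the last vertex
`w` of `W` adjacent to `a` is also adjacent to `b`, and `a x b w` is an induced 4-cycle. If `P`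
continues beyond `b`, the rest of `W` followed by the rest of `P` backwards leads from `w` to
another neighbour of `b` while avoiding the neighbours of `a` and `x`; the absence of holes then
produces a copy of the domino, `F` or `X5`. If `P` starts before `a`, reverse both paths. Otherwise
`P` has length two and `w` is adjacent to both ends of `W`, which is too long for that.
-/

open SimpleGraph

/-- The internal vertices of a walk (support minus the two endpoints). -/
def internals {V : Type*} {G : SimpleGraph V} {u v : V} (W : G.Walk u v) : List V :=
  W.support.tail.dropLast

/-- A `uv`-walk `W` dominates a `uv`-walk `W'` if every internal vertex of `W'`
is adjacent to some internal vertex of `W` or belongs to `W`. -/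
def Dominates {V : Type*} (G : SimpleGraph V) {u v : V} (W W' : G.Walk u v) : Prop :=
  ∀ x ∈ internals W', x ∈ W.support ∨ ∃ y ∈ internals W, G.Adj x y

/-- An induced (chordless) path: a path such that any two vertices on it are
adjacent in `G` only if they are consecutive on the path. -/
def IsInducedPath {V : Type*} (G : SimpleGraph V) {u v : V} (W : G.Walk u v) : Prop :=
  W.IsPath ∧ ∀ a ∈ W.support, ∀ b ∈ W.support, G.Adj a b → W.toSubgraph.Adj a b

/-- `G` contains a hole: an induced (chordless) cycle of length at least 5. -/
def HasHole {V : Type*} (G : SimpleGraph V) : Prop :=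
  ∃ (x : V) (c : G.Walk x x), c.IsCycle ∧ 5 ≤ c.length ∧
    ∀ a ∈ c.support, ∀ b ∈ c.support, G.Adj a b → c.toSubgraph.Adj a b

/-- The house graph: 5-cycle `x0x1x2x3x4` plus the chord `x1x4`. -/
def houseGraph : SimpleGraph (Fin 5) :=
  SimpleGraph.fromEdgeSet {s(0,1), s(1,2), s(2,3), s(3,4), s(4,0), s(1,4)}

/-- The domino: 6-cycle `x0x1x2x3x4x5` plus the chord `x1x4`. -/
def dominoGraph : SimpleGraph (Fin 6) :=
  SimpleGraph.fromEdgeSet {s(0,1), s(1,2), s(2,3), s(3,4), s(4,5), s(5,0), s(1,4)}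

/-- The graph `X5`. -/
def x5Graph : SimpleGraph (Fin 6) :=
  SimpleGraph.fromEdgeSet {s(0,1), s(0,5), s(1,2), s(1,5), s(2,3), s(2,5), s(3,4), s(4,5)}

/-- The graph `F`. -/
def fGraph : SimpleGraph (Fin 7) :=
  SimpleGraph.fromEdgeSet {s(0,1), s(0,6), s(1,2), s(5,6), s(2,6), s(2,3), s(2,5), s(3,4), s(4,5)}

section Embeddings

variable {V ι : Type*} {G : SimpleGraph V}

/-- In a graph without twins, adjacency alone separates the vertices, so that a map preserving and
reflecting adjacency is automatically injective. -/
theorem nonempty_embedding_of_adj_iff [LinearOrder ι] {H : SimpleGraph ι}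
    (hH : ∀ i j, (∀ k, H.Adj i k ↔ H.Adj j k) → i = j) (f : ι → V)
    (hf : ∀ i j, i < j → (G.Adj (f i) (f j) ↔ H.Adj i j)) : Nonempty (H ↪g G) := by
  have hadj (i j : ι) : G.Adj (f i) (f j) ↔ H.Adj i j := by
    rcases lt_trichotomy i j with hij | rfl | hij
    · exact hf i j hij
    · exact iff_of_false G.irrefl H.irrefl
    · rw [G.adj_comm, H.adj_comm, hf j i hij]
  refine ⟨⟨⟨f, fun i j hij => hH i j fun k => ?_⟩, hadj _ _⟩⟩
  rw [← hadj, ← hadj, hij]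

theorem nonempty_dominoGraph_embedding {a b c d e f : V}
    (hab : G.Adj a b) (hbc : G.Adj b c) (hcd : G.Adj c d) (hde : G.Adj d e) (hef : G.Adj e f)
    (haf : G.Adj a f) (hbe : G.Adj b e) (hac : ¬ G.Adj a c) (had : ¬ G.Adj a d)
    (hae : ¬ G.Adj a e) (hbd : ¬ G.Adj b d) (hbf : ¬ G.Adj b f) (hce : ¬ G.Adj c e)
    (hcf : ¬ G.Adj c f) (hdf : ¬ G.Adj d f) : Nonempty (dominoGraph ↪g G) := by
  refine nonempty_embedding_of_adj_iff ?_ ![a, b, c, d, e, f] ?_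
  · simp only [dominoGraph, fromEdgeSet_adj, Set.mem_insert_iff, Set.mem_singleton_iff]
    decide
  · simp [Fin.forall_fin_succ, dominoGraph, *]

theorem nonempty_x5Graph_embedding {a b c d e f : V}
    (hab : G.Adj a b) (haf : G.Adj a f) (hbc : G.Adj b c) (hbf : G.Adj b f) (hcd : G.Adj c d)
    (hcf : G.Adj c f) (hde : G.Adj d e) (hef : G.Adj e f) (hac : ¬ G.Adj a c)
    (had : ¬ G.Adj a d) (hae : ¬ G.Adj a e) (hbd : ¬ G.Adj b d) (hbe : ¬ G.Adj b e)
    (hce : ¬ G.Adj c e) (hdf : ¬ G.Adj d f) : Nonempty (x5Graph ↪g G) := by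
  refine nonempty_embedding_of_adj_iff ?_ ![a, b, c, d, e, f] ?_
  · simp only [x5Graph, fromEdgeSet_adj, Set.mem_insert_iff, Set.mem_singleton_iff]
    decide
  · simp [Fin.forall_fin_succ, x5Graph, *]

theorem nonempty_fGraph_embedding {a b c d e f g : V}
    (hab : G.Adj a b) (hag : G.Adj a g) (hbc : G.Adj b c) (hfg : G.Adj f g) (hcg : G.Adj c g)
    (hcd : G.Adj c d) (hcf : G.Adj c f) (hde : G.Adj d e) (hef : G.Adj e f)
    (hac : ¬ G.Adj a c) (had : ¬ G.Adj a d) (hae : ¬ G.Adj a e) (haf : ¬ G.Adj a f)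
    (hbd : ¬ G.Adj b d) (hbe : ¬ G.Adj b e) (hbf : ¬ G.Adj b f) (hbg : ¬ G.Adj b g)
    (hce : ¬ G.Adj c e) (hdf : ¬ G.Adj d f) (hdg : ¬ G.Adj d g) (heg : ¬ G.Adj e g) :
    Nonempty (fGraph ↪g G) := by
  refine nonempty_embedding_of_adj_iff ?_ ![a, b, c, d, e, f, g] ?_
  · simp only [fGraph, fromEdgeSet_adj, Set.mem_insert_iff, Set.mem_singleton_iff]
    decide
  · simp [Fin.forall_fin_succ, fGraph, *]

end Embeddings

section Walks

variable {V : Type*} {G : SimpleGraph V} {u v s : V}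

theorem exists_getVert_of_mem_support_take {p : G.Walk u v} {i : ℕ} (hs : s ∈ (p.take i).support) :
    ∃ k ≤ i, k ≤ p.length ∧ p.getVert k = s := by
  obtain ⟨k, rfl, hk⟩ := Walk.mem_support_iff_exists_getVert.mp hs
  rw [Walk.take_length] at hk
  exact ⟨k, by omega, by omega, by rw [Walk.take_getVert, min_eq_right (by omega)]⟩

theorem exists_getVert_of_mem_support_drop {p : G.Walk u v} {i : ℕ} (hi : i ≤ p.length)
    (hs : s ∈ (p.drop i).support) : ∃ k, i ≤ k ∧ k ≤ p.length ∧ p.getVert k = s := by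
  obtain ⟨k, rfl, hk⟩ := Walk.mem_support_iff_exists_getVert.mp hs
  rw [Walk.drop_length] at hk
  exact ⟨i + k, by omega, by omega, (p.drop_getVert i k).symm⟩

theorem exists_getVert_of_mem_support_drop_append_reverse {p q : G.Walk u v} {i j : ℕ}
    (hi : i ≤ p.length) (hj : j ≤ q.length)
    (hs : s ∈ ((p.drop i).append (q.drop j).reverse).support) :
    (∃ k, i ≤ k ∧ k < p.length ∧ p.getVert k = s) ∨
      ∃ k, j ≤ k ∧ k ≤ q.length ∧ q.getVert k = s := by
  rw [Walk.mem_support_append_iff, Walk.support_reverse, List.mem_reverse] at hs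
  rcases hs with hs | hs
  · obtain ⟨k, hik, hk, rfl⟩ := exists_getVert_of_mem_support_drop hi hs
    rcases hk.lt_or_eq with hk | rfl
    · exact .inl ⟨k, hik, hk, rfl⟩
    · exact .inr ⟨q.length, hj, le_rfl, q.getVert_length.trans p.getVert_length.symm⟩
  · exact .inr (exists_getVert_of_mem_support_drop hj hs)

theorem mem_internals_iff {p : G.Walk u v} :
    s ∈ internals p ↔ ∃ k, 0 < k ∧ k < p.length ∧ p.getVert k = s := by
  have hget (k : ℕ) (hk : k < (internals p).length) : (internals p)[k] = p.getVert (k + 1) := by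
    simp [internals, Walk.support_getElem_eq_getVert]
  have hlen : (internals p).length = p.length - 1 := by simp [internals]
  rw [List.mem_iff_getElem]
  constructor
  · rintro ⟨k, hk, rfl⟩
    exact ⟨k + 1, k.succ_pos, by omega, (hget k hk).symm⟩
  · rintro ⟨k, hk₀, hk, rfl⟩
    refine ⟨k - 1, by omega, ?_⟩
    rw [hget, Nat.sub_add_cancel hk₀]

theorem eq_or_eq_or_mem_internals {p : G.Walk u v} (hs : s ∈ p.support) :
    s = u ∨ s = v ∨ s ∈ internals p := by
  obtain ⟨k, rfl, hk⟩ := Walk.mem_support_iff_exists_getVert.mp hs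
  rcases Nat.eq_zero_or_pos k with rfl | hk₀
  · exact .inl p.getVert_zero
  rcases hk.eq_or_lt with rfl | hk
  · exact .inr (.inl p.getVert_length)
  · exact .inr (.inr (mem_internals_iff.mpr ⟨k, hk₀, hk, rfl⟩))

theorem internals_reverse (p : G.Walk u v) : internals p.reverse = (internals p).reverse := by
  simp [internals, List.tail_reverse, List.dropLast_reverse, List.tail_dropLast]

/-- The new walk replaces the part of `p` between the indices `i` and `j` by `q`; no order between
`i` and `j` is required. -/
theorem exists_walk_replacing (p : G.Walk u v) {i j : ℕ} (hj : j ≤ p.length)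
    (q : G.Walk (p.getVert i) (p.getVert j)) :
    ∃ r : G.Walk u v, r.length + j ≤ p.length + (i + q.length) ∧
      ∀ s ∈ r.support, s ∈ p.support ∨ s ∈ q.support := by
  refine ⟨(p.take i).append (q.append (p.drop j)), ?_, fun s hs => ?_⟩
  · simp only [Walk.length_append, Walk.take_length, Walk.drop_length]
    omega
  · rw [Walk.mem_support_append_iff, Walk.mem_support_append_iff] at hs
    rcases hs with hs | hs | hs
    · exact .inl ((p.isSubwalk_take i).support_subset hs)
    · exact .inr hs
    · exact .inl ((p.isSubwalk_drop j).support_subset hs)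

end Walks

namespace IsInducedPath

variable {V : Type*} {G : SimpleGraph V} {u v : V} {p : G.Walk u v}

theorem le_succ_of_adj (hp : IsInducedPath G p) {i j : ℕ} (hi : i ≤ p.length) (hj : j ≤ p.length)
    (hij : G.Adj (p.getVert i) (p.getVert j)) : j ≤ i + 1 := by
  obtain ⟨k, hk, hkl⟩ := (Walk.toSubgraph_adj_iff p).mp
    (hp.2 _ (p.getVert_mem_support i) _ (p.getVert_mem_support j) hij)
  have hinj {m n : ℕ} (hm : m ≤ p.length) (hn : n ≤ p.length) (h : p.getVert m = p.getVert n) :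
      m = n := hp.1.getVert_injOn hm hn h
  rcases Sym2.eq_iff.mp hk with ⟨h₁, h₂⟩ | ⟨h₁, h₂⟩
  · have := hinj (by omega) hi h₁
    have := hinj (by omega) hj h₂
    omega
  · have := hinj (by omega) hj h₁
    have := hinj (by omega) hi h₂
    omega

theorem reverse (hp : IsInducedPath G p) : IsInducedPath G p.reverse := by
  refine ⟨hp.1.reverse, fun a ha b hb hab => ?_⟩
  rw [Walk.support_reverse, List.mem_reverse] at ha hb
  rw [Walk.toSubgraph_reverse]
  exact hp.2 a ha b hb hab

theorem of_length_le
    (hmin : ∀ r : G.Walk u v, (∀ s ∈ r.support, s ∈ p.support) → p.length ≤ r.length) :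
    IsInducedPath G p := by
  classical
  have hpath : p.IsPath := by
    rw [← p.bypass_eq_self_of_length_le_length_bypass
      (hmin p.bypass fun s hs => p.support_bypass_subset_support hs)]
    exact p.bypass_isPath
  have hshort (i j : ℕ) (hj : j ≤ p.length) (hij : G.Adj (p.getVert i) (p.getVert j)) :
      j ≤ i + 1 := by
    obtain ⟨r, hr, hrs⟩ := exists_walk_replacing p hj hij.toWalk
    have := hmin r fun s hs => (hrs s hs).elim id fun hs => by
      rw [Adj.support_toWalk, List.mem_pair] at hs
      rcases hs with rfl | rfl <;> exact p.getVert_mem_support _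
    rw [Adj.length_toWalk] at hr
    omega
  refine ⟨hpath, fun a ha b hb hab => ?_⟩
  obtain ⟨i, rfl, hi⟩ := Walk.mem_support_iff_exists_getVert.mp ha
  obtain ⟨j, rfl, hj⟩ := Walk.mem_support_iff_exists_getVert.mp hb
  have hne : i ≠ j := fun h => hab.ne (congrArg p.getVert h)
  have := hshort i j hj hab
  have := hshort j i hi hab.symm
  obtain rfl | rfl : j = i + 1 ∨ i = j + 1 := by omega
  · exact p.toSubgraph_adj_getVert hj
  · exact (p.toSubgraph_adj_getVert hi).symm

theorem exists_first (p : G.Walk u v) {Q : V → Prop} (hv : Q v) :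
    ∃ z, ∃ q : G.Walk u z, IsInducedPath G q ∧ Q z ∧ (∀ s ∈ q.support, s ∈ p.support) ∧
      ∀ s ∈ q.support, Q s → s = z := by
  obtain ⟨⟨z, q⟩, ⟨hz, hqp⟩, hmin⟩ := exists_minimalFor_of_wellFoundedLT
    (fun q : (z : V) × G.Walk u z => Q q.1 ∧ ∀ s ∈ q.2.support, s ∈ p.support)
    (fun q => q.2.length) ⟨⟨v, p⟩, hv, fun _ hs => hs⟩
  have hshortest {z' : V} (r : G.Walk u z') (hz' : Q z') (hrq : ∀ s ∈ r.support, s ∈ q.support) :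
      q.length ≤ r.length :=
    (le_total _ _).elim id
      (hmin (j := ⟨z', r⟩) ⟨hz', fun s hs => hqp s (hrq s hs)⟩)
  refine ⟨z, q, .of_length_le fun r => hshortest r hz, hz, hqp, fun s hs hQs => ?_⟩
  obtain ⟨k, rfl, hk⟩ := Walk.mem_support_iff_exists_getVert.mp hs
  have := hshortest (q.take k) hQs fun s hs => (q.isSubwalk_take k).support_subset hs
  rw [Walk.take_length] at this
  rw [show k = q.length by omega, Walk.getVert_length]

theorem hasHole (hp : IsInducedPath G p) (hlen : 3 ≤ p.length) {b : V} (hbp : b ∉ p.support)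
    (hbu : G.Adj b u) (hvb : G.Adj v b)
    (hends : ∀ s ∈ p.support, G.Adj s b → s = u ∨ s = v) : HasHole G := by
  have huv : u ≠ v := by
    rintro rfl
    have := Walk.length_eq_zero_iff.mpr (Walk.isPath_iff_nil.mp hp.1)
    omega
  have hcycle (s t : V) : (Walk.cons hbu (p.concat hvb)).toSubgraph.Adj s t ↔
      s(s, t) = s(b, u) ∨ p.toSubgraph.Adj s t ∨ s(s, t) = s(v, b) := by
    simp only [← Subgraph.mem_edgeSet, Walk.mem_edges_toSubgraph, Walk.edges_cons,
      Walk.edges_concat, List.concat_eq_append, List.mem_cons, List.mem_append, List.not_mem_nil,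
      or_false]
  have hbadj (s : V) (hs : s ∈ p.support) (hsb : G.Adj s b) :
      (Walk.cons hbu (p.concat hvb)).toSubgraph.Adj s b := by
    rw [hcycle]
    rcases hends s hs hsb with rfl | rfl
    · exact .inl Sym2.eq_swap
    · exact .inr (.inr rfl)
  refine ⟨b, .cons hbu (p.concat hvb), ?_, ?_, fun s hs t ht hst => ?_⟩
  · rw [Walk.cons_isCycle_iff, Walk.edges_concat, List.concat_eq_append, List.mem_append,
      List.mem_singleton, Sym2.eq_swap, Sym2.congr_left]
    exact ⟨hp.1.concat hbp hvb,
      not_or.mpr ⟨fun h => hbp (p.snd_mem_support_of_mem_edges h), huv⟩⟩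
  · rw [Walk.length_cons, Walk.length_concat]
    omega
  · have hmem {s : V} (hs : s ∈ (Walk.cons hbu (p.concat hvb)).support) :
        s = b ∨ s ∈ p.support := by
      simpa [Walk.support_concat, or_comm] using hs
    rcases hmem hs with rfl | hs' <;> rcases hmem ht with rfl | ht'
    · exact absurd hst G.irrefl
    · exact (hbadj t ht' hst.symm).symm
    · exact hbadj s hs' hst
    · exact (hcycle s t).mpr (.inr (.inl (hp.2 s hs' t ht' hst)))

end IsInducedPath

section HoleFree

variable {V : Type*} {G : SimpleGraph V}

theorem exists_near_neighbor_of_walk (hhole : ¬ HasHole G) {b c y : V} (p : G.Walk y c)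
    (hbp : b ∉ p.support) (hyb : G.Adj y b) (hcb : G.Adj c b) (hcy : c ≠ y) :
    ∃ z ∈ p.support, z ≠ y ∧ G.Adj z b ∧
      (G.Adj y z ∨ ¬ G.Adj y z ∧ ∃ t ∈ p.support, ¬ G.Adj t b ∧ G.Adj y t ∧ G.Adj t z) := by
  obtain ⟨z, q, hq, ⟨hzb, hzy⟩, hqp, hfirst⟩ :=
    IsInducedPath.exists_first p (Q := fun s => G.Adj s b ∧ s ≠ y) ⟨hcb, hcy⟩
  have hshort : q.length ≤ 2 := by
    by_contra! hlong
    refine hhole (hq.hasHole hlong (fun hb => hbp (hqp b hb)) hyb.symm hzb fun s hs hsb => ?_)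
    exact or_iff_not_imp_left.mpr fun hsy => hfirst s hs ⟨hsb, hsy⟩
  refine ⟨z, hqp z q.end_mem_support, hzy, hzb, or_iff_not_imp_left.mpr fun hyz => ⟨hyz, ?_⟩⟩
  match q, hshort with
  | .nil, _ => exact absurd rfl hzy
  | .cons hyz' .nil, _ => exact absurd hyz' hyz
  | .cons (v := t) hyt (.cons htz .nil), _ =>
    exact ⟨t, hqp t (by simp), fun htb => htz.ne (hfirst t (by simp) ⟨htb, hyt.ne'⟩), hyt, htz⟩

/-- The square `a x b w` lies in a domino if `y` is not adjacent to `b`. Otherwise it lies in a copy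
of `X5` or of `F`, depending on whether `y` is adjacent to the next neighbour of `b` on `q`. -/
theorem nonempty_embedding_of_square (hhole : ¬ HasHole G) {a x b w y c : V}
    (hax : G.Adj a x) (hxb : G.Adj x b) (hbw : G.Adj b w) (hwa : G.Adj w a)
    (hab : ¬ G.Adj a b) (hxw : ¬ G.Adj x w) (q : G.Walk y c) (hwy : G.Adj w y)
    (hcb : G.Adj c b) (hcy : c ≠ y) (hqa : ∀ t ∈ q.support, ¬ G.Adj t a)
    (hqx : ∀ t ∈ q.support, ¬ G.Adj t x) (hqw : ∀ t ∈ q.support, G.Adj t w → t = y) :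
    Nonempty (dominoGraph ↪g G) ∨ Nonempty (fGraph ↪g G) ∨ Nonempty (x5Graph ↪g G) := by
  have hbq : b ∉ q.support := fun hb => hqx b hb hxb.symm
  have hwq : w ∉ q.support := fun hw => hqa w hw hwa
  have hyq := q.start_mem_support
  by_cases hyb : G.Adj y b
  · obtain ⟨z, hzq, hzy, hzb, hyz | ⟨hyz, t, htq, htb, hyt, htz⟩⟩ :=
      exists_near_neighbor_of_walk hhole q hbq hyb hcb hcy
    · have hzw : ¬ G.Adj z w := fun h => hzy (hqw z hzq h)
      exact .inr <| .inr <| nonempty_x5Graph_embedding (a := z) (b := y) (c := w) (d := a) (e := x)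
        (f := b) hyz.symm hzb hwy.symm hyb hwa hbw.symm hax hxb hzw (hqa z hzq) (hqx z hzq)
        (hqa y hyq) (hqx y hyq) (mt Adj.symm hxw) hab
    · have hzw : ¬ G.Adj z w := fun h => hzy (hqw z hzq h)
      have htw : ¬ G.Adj t w := fun h => hyt.ne' (hqw t htq h)
      exact .inr <| .inl <| nonempty_fGraph_embedding (a := t) (b := z) (c := b) (d := x) (e := a)
        (f := w) (g := y) htz hyt.symm hzb hwy hyb.symm hxb.symm hbw hax.symm hwa.symm htb
        (hqx t htq) (hqa t htq) htw (hqx z hzq) (hqa z hzq) hzw (mt Adj.symm hyz)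
        (mt Adj.symm hab) hxw (mt Adj.symm (hqx y hyq)) (mt Adj.symm (hqa y hyq))
  · obtain ⟨z, hzq, hzw, hzb, hz⟩ := exists_near_neighbor_of_walk hhole (.cons hwy q)
      (by simpa using ⟨hbw.ne, hbq⟩) hbw.symm hcb (fun h => hwq (h ▸ q.end_mem_support))
    have hmem {s : V} (hs : s ∈ (Walk.cons hwy q).support) (hsw : s ≠ w) : s ∈ q.support :=
      (List.mem_cons.mp hs).resolve_left hsw
    have hzq := hmem hzq hzw
    have hwz : ¬ G.Adj w z := fun h => hyb (hqw z hzq h.symm ▸ hzb)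
    obtain ⟨-, t, htq, -, hwt, htz⟩ := hz.resolve_left hwz
    obtain rfl : t = y := hqw t (hmem htq hwt.ne') hwt.symm
    exact .inl <| nonempty_dominoGraph_embedding (a := a) (b := w) (c := t) (d := z) (e := b)
      (f := x) hwa.symm hwt htz hzb hxb.symm hax hbw.symm (mt Adj.symm (hqa t hyq))
      (mt Adj.symm (hqa z hzq)) hab hwz (mt Adj.symm hxw) hyb (hqx t hyq) (hqx z hzq)

end HoleFree

/-- A shortest walk between its ends. In a disconnected graph `G.dist u v` may be the junk value
`0`, but not here, as the walk itself joins `u` to `v`. -/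
def IsGeodesic {V : Type*} {G : SimpleGraph V} {u v : V} (P : G.Walk u v) : Prop :=
  P.length = G.dist u v

namespace IsGeodesic

variable {V : Type*} {G : SimpleGraph V} {u v : V} {P : G.Walk u v}

theorem reverse (hP : IsGeodesic P) : IsGeodesic P.reverse := by
  rw [IsGeodesic, Walk.length_reverse, dist_comm]
  exact hP

theorem getVert_inj (hP : IsGeodesic P) {i j : ℕ} (hi : i ≤ P.length) (hj : j ≤ P.length) :
    P.getVert i = P.getVert j ↔ i = j :=
  (P.isPath_of_length_eq_dist hP).getVert_injOn.eq_iff hi hj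

theorem le_add_length (hP : IsGeodesic P) {i j : ℕ} (hj : j ≤ P.length)
    (q : G.Walk (P.getVert i) (P.getVert j)) : j ≤ i + q.length := by
  obtain ⟨r, hr, -⟩ := exists_walk_replacing P hj q
  have := hP.le.trans (dist_le r)
  omega

theorem le_succ_of_adj (hP : IsGeodesic P) {i j : ℕ} (hj : j ≤ P.length)
    (hij : G.Adj (P.getVert i) (P.getVert j)) : j ≤ i + 1 :=
  hP.le_add_length hj hij.toWalk

theorem not_adj_getVert_add_two (hP : IsGeodesic P) {i : ℕ} (hi : i + 2 ≤ P.length) :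
    ¬ G.Adj (P.getVert i) (P.getVert (i + 2)) := fun hadj => by
  have := hP.le_succ_of_adj hi hadj
  omega

theorem le_add_two_of_adj_of_adj (hP : IsGeodesic P) {i j : ℕ} (hj : j ≤ P.length) {s : V}
    (his : G.Adj (P.getVert i) s) (hsj : G.Adj s (P.getVert j)) : j ≤ i + 2 :=
  hP.le_add_length hj (.cons his hsj.toWalk)

end IsGeodesic

/-- The vertex `P.getVert (i + 1)` is internal to the geodesic `P` and violates the domination of
`P` by the induced path `W`. The index is shifted so that the neighbours of this vertex on `P` have
the indices `i` and `i + 2`. -/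
structure IsUndominatedAt {V : Type*} {G : SimpleGraph V} {u v : V} (W P : G.Walk u v) (i : ℕ) :
    Prop where
  isInducedPath : IsInducedPath G W
  isGeodesic : IsGeodesic P
  add_two_le_length : i + 2 ≤ P.length
  notMem_support : P.getVert (i + 1) ∉ W.support
  not_adj_of_mem_internals : ∀ y ∈ internals W, ¬ G.Adj (P.getVert (i + 1)) y

namespace IsUndominatedAt

variable {V : Type*} {G : SimpleGraph V} {u v : V} {W P : G.Walk u v} {i : ℕ}

theorem reverse (h : IsUndominatedAt W P i) :
    IsUndominatedAt W.reverse P.reverse (P.length - (i + 2)) := by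
  have hi := h.add_two_le_length
  have hvert : P.reverse.getVert (P.length - (i + 2) + 1) = P.getVert (i + 1) := by
    rw [Walk.getVert_reverse]
    congr 1
    omega
  refine ⟨h.isInducedPath.reverse, h.isGeodesic.reverse, ?_, ?_, ?_⟩
  · rw [Walk.length_reverse]
    omega
  · rw [hvert, Walk.support_reverse, List.mem_reverse]
    exact h.notMem_support
  · simpa only [hvert, internals_reverse, List.mem_reverse] using h.not_adj_of_mem_internals

theorem eq_or_eq_of_adj (h : IsUndominatedAt W P i) {s : V}
    (hs : s ∈ W.support ∨ s ∈ P.support) (hadj : G.Adj (P.getVert (i + 1)) s) :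
    s = P.getVert i ∨ s = P.getVert (i + 2) := by
  have hi := h.add_two_le_length
  have hsP : s ∈ P.support := by
    refine hs.elim (fun hsW => ?_) id
    rcases eq_or_eq_or_mem_internals hsW with rfl | rfl | hs
    · exact P.start_mem_support
    · exact P.end_mem_support
    · exact absurd hadj (h.not_adj_of_mem_internals s hs)
  obtain ⟨k, rfl, hk⟩ := Walk.mem_support_iff_exists_getVert.mp hsP
  have := h.isGeodesic.le_succ_of_adj hk hadj
  have := h.isGeodesic.le_succ_of_adj (by omega) hadj.symm
  have : k ≠ i + 1 := fun hk => hadj.ne (congrArg P.getVert hk.symm)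
  obtain rfl | rfl : k = i ∨ k = i + 2 := by omega
  · exact .inl rfl
  · exact .inr rfl

theorem mem_internals_of_adj_of_adj (h : IsUndominatedAt W P i) {t : V} (ht : t ∈ W.support)
    (hat : G.Adj (P.getVert i) t) (htb : G.Adj t (P.getVert (i + 2))) : t ∈ internals W := by
  have hi := h.add_two_le_length
  rcases eq_or_eq_or_mem_internals ht with rfl | rfl | ht
  · have := h.isGeodesic.le_succ_of_adj (i := 0) hi (by rwa [P.getVert_zero])
    omega
  · have := h.isGeodesic.le_succ_of_adj (i := i) (j := P.length) le_rfl
      (by rwa [P.getVert_length])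
    omega
  · exact ht

theorem exists_common_neighbor_of_walk (h : IsUndominatedAt W P i) (hhole : ¬ HasHole G)
    (q : G.Walk (P.getVert i) (P.getVert (i + 2)))
    (hq : ∀ s ∈ q.support, s ∈ W.support ∨ s ∈ P.support) (hxq : P.getVert (i + 1) ∉ q.support) :
    ∃ t ∈ q.support, t ∈ internals W ∧ G.Adj (P.getVert i) t ∧ G.Adj t (P.getVert (i + 2)) := by
  have hi := h.add_two_le_length
  have hne : P.getVert (i + 2) ≠ P.getVert i := by
    rw [Ne, h.isGeodesic.getVert_inj hi (by omega)]
    omega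
  obtain ⟨z, hzq, hza, hzx, hz⟩ := exists_near_neighbor_of_walk hhole q hxq
    (P.adj_getVert_succ (by omega)) (P.adj_getVert_succ hi).symm hne
  obtain rfl := (h.eq_or_eq_of_adj (hq z hzq) hzx.symm).resolve_left hza
  obtain ⟨-, t, htq, -, hat, htb⟩ := hz.resolve_left (h.isGeodesic.not_adj_getVert_add_two hi)
  have htP : t ∉ P.support := fun htP => by
    obtain ⟨k, rfl, hk⟩ := Walk.mem_support_iff_exists_getVert.mp htP
    have := h.isGeodesic.le_succ_of_adj hk hat
    have := h.isGeodesic.le_succ_of_adj hi htb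
    obtain rfl : k = i + 1 := by omega
    exact hxq htq
  exact ⟨t, htq, h.mem_internals_of_adj_of_adj ((hq t htq).resolve_right htP) hat htb, hat, htb⟩

theorem exists_common_neighbor (h : IsUndominatedAt W P i) (hhole : ¬ HasHole G) :
    ∃ t ∈ internals W, G.Adj (P.getVert i) t ∧ G.Adj t (P.getVert (i + 2)) := by
  have hi := h.add_two_le_length
  have hx_take : P.getVert (i + 1) ∉ (P.take i).support := fun hx => by
    obtain ⟨k, hki, hk, hkx⟩ := exists_getVert_of_mem_support_take hx
    rw [h.isGeodesic.getVert_inj hk (by omega)] at hkx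
    omega
  have hx_drop : P.getVert (i + 1) ∉ (P.drop (i + 2)).support := fun hx => by
    obtain ⟨k, hik, hk, hkx⟩ := exists_getVert_of_mem_support_drop hi hx
    rw [h.isGeodesic.getVert_inj hk (by omega)] at hkx
    omega
  obtain ⟨t, -, ht⟩ := h.exists_common_neighbor_of_walk hhole
    ((P.take i).reverse.append (W.append (P.drop (i + 2)).reverse))
    (fun s hs => by
      simp only [Walk.mem_support_append_iff, Walk.support_reverse, List.mem_reverse] at hs
      rcases hs with hs | hs | hs
      · exact .inr ((P.isSubwalk_take i).support_subset hs)
      · exact .inl hs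
      · exact .inr ((P.isSubwalk_drop (i + 2)).support_subset hs))
    (by
      simpa only [Walk.mem_support_append_iff, Walk.support_reverse, List.mem_reverse, not_or]
        using ⟨hx_take, h.notMem_support, hx_drop⟩)
  exact ⟨t, ht⟩

theorem exists_last_neighbor (h : IsUndominatedAt W P i) (hhole : ¬ HasHole G) :
    ∃ j, 0 < j ∧ j < W.length ∧ G.Adj (P.getVert i) (W.getVert j) ∧
      ∀ k, j < k → k < W.length → ¬ G.Adj (P.getVert i) (W.getVert k) := by
  obtain ⟨t, htW, hat, -⟩ := h.exists_common_neighbor hhole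
  obtain ⟨k₀, hk₀, hk₀W, rfl⟩ := mem_internals_iff.mp htW
  have hfin : {k | 0 < k ∧ k < W.length ∧ G.Adj (P.getVert i) (W.getVert k)}.Finite :=
    (Set.finite_lt_nat W.length).subset fun _ hk => hk.2.1
  obtain ⟨j, ⟨hj₀, hjW, haj⟩, hmax⟩ := hfin.exists_maximal ⟨k₀, hk₀, hk₀W, hat⟩
  exact ⟨j, hj₀, hjW, haj, fun k hjk hk hak =>
    (hmax ⟨hj₀.trans hjk, hk, hak⟩ hjk.le).not_gt hjk⟩

theorem adj_of_last_neighbor (h : IsUndominatedAt W P i) (hhole : ¬ HasHole G) {j : ℕ}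
    (hjW : j < W.length) (haj : G.Adj (P.getVert i) (W.getVert j))
    (hlast : ∀ k, j < k → k < W.length → ¬ G.Adj (P.getVert i) (W.getVert k)) :
    G.Adj (W.getVert j) (P.getVert (i + 2)) := by
  have hi := h.add_two_le_length
  have htail {s : V} (hs : s ∈ ((W.drop j).append (P.drop (i + 2)).reverse).support) :=
    exists_getVert_of_mem_support_drop_append_reverse hjW.le hi hs
  obtain ⟨t, htq, -, hat, htb⟩ := h.exists_common_neighbor_of_walk hhole
    (.cons haj ((W.drop j).append (P.drop (i + 2)).reverse))
    (fun s hs => by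
      rcases List.mem_cons.mp hs with rfl | hs
      · exact .inr (P.getVert_mem_support i)
      · rcases htail hs with ⟨k, -, -, rfl⟩ | ⟨k, -, -, rfl⟩
        · exact .inl (W.getVert_mem_support k)
        · exact .inr (P.getVert_mem_support k))
    (fun hx => by
      rcases List.mem_cons.mp hx with hx | hx
      · rw [h.isGeodesic.getVert_inj (by omega) (by omega)] at hx
        omega
      · rcases htail hx with ⟨k, -, -, hk⟩ | ⟨k, hik, hk, hkx⟩
        · exact h.notMem_support (hk ▸ W.getVert_mem_support k)
        · rw [h.isGeodesic.getVert_inj hk (by omega)] at hkx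
          omega)
  rcases htail ((List.mem_cons.mp htq).resolve_left hat.ne') with
    ⟨k, hjk, hk, rfl⟩ | ⟨k, hik, hk, rfl⟩
  · rcases hjk.eq_or_lt with rfl | hjk
    · exact htb
    · exact absurd hat (hlast k hjk hk)
  · have := h.isGeodesic.le_succ_of_adj hk hat
    omega

theorem nonempty_embedding_of_lt (h : IsUndominatedAt W P i) (hhole : ¬ HasHole G)
    (hi : i + 2 < P.length) :
    Nonempty (dominoGraph ↪g G) ∨ Nonempty (fGraph ↪g G) ∨ Nonempty (x5Graph ↪g G) := by
  obtain ⟨j, hj₀, hjW, haj, hlast⟩ := h.exists_last_neighbor hhole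
  have hjb := h.adj_of_last_neighbor hhole hjW haj hlast
  have hfar (k : ℕ) (hik : i + 3 ≤ k) (hk : k ≤ P.length) : ¬ G.Adj (W.getVert j) (P.getVert k) :=
    fun hjk => by
      have := h.isGeodesic.le_add_two_of_adj_of_adj hk haj hjk
      omega
  have hx (k : ℕ) (hk₀ : 0 < k) (hk : k < W.length) : ¬ G.Adj (P.getVert (i + 1)) (W.getVert k) :=
    h.not_adj_of_mem_internals _ (mem_internals_iff.mpr ⟨k, hk₀, hk, rfl⟩)
  have htail {s : V} (hs : s ∈ ((W.drop (j + 1)).append (P.drop (i + 3)).reverse).support) :=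
    exists_getVert_of_mem_support_drop_append_reverse hjW hi hs
  refine nonempty_embedding_of_square hhole (P.adj_getVert_succ (by omega))
    (P.adj_getVert_succ (by omega)) hjb.symm haj.symm
    (h.isGeodesic.not_adj_getVert_add_two hi.le) (hx j hj₀ hjW)
    ((W.drop (j + 1)).append (P.drop (i + 3)).reverse) (W.adj_getVert_succ hjW)
    (P.adj_getVert_succ hi).symm (fun hcy => ?_) (fun t ht hta => ?_) (fun t ht htx => ?_)
    fun t ht htw => ?_
  · exact hfar (i + 3) le_rfl hi (hcy ▸ W.adj_getVert_succ hjW)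
  · rcases htail ht with ⟨k, hjk, hk, rfl⟩ | ⟨k, hik, hk, rfl⟩
    · exact hlast k hjk hk hta.symm
    · have := h.isGeodesic.le_succ_of_adj hk hta.symm
      omega
  · rcases htail ht with ⟨k, hjk, hk, rfl⟩ | ⟨k, hik, hk, rfl⟩
    · exact hx k (by omega) hk htx.symm
    · have := h.isGeodesic.le_succ_of_adj hk htx.symm
      omega
  · rcases htail ht with ⟨k, hjk, hk, rfl⟩ | ⟨k, hik, hk, rfl⟩
    · have := h.isInducedPath.le_succ_of_adj hjW.le hk.le htw.symm
      rw [show k = j + 1 by omega]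
    · exact absurd htw.symm (hfar k hik hk)

theorem length_le_two (h : IsUndominatedAt W P i) (hhole : ¬ HasHole G) (hP : P.length ≤ 2) :
    W.length ≤ 2 := by
  have hi := h.add_two_le_length
  obtain rfl : i = 0 := by omega
  obtain ⟨t, htW, hat, htb⟩ := h.exists_common_neighbor hhole
  obtain ⟨k, -, hk, rfl⟩ := mem_internals_iff.mp htW
  rw [P.getVert_zero] at hat
  rw [P.getVert_of_length_le hP] at htb
  have := h.isInducedPath.le_succ_of_adj (i := 0) (Nat.zero_le _) hk.le (by rwa [W.getVert_zero])
  have := h.isInducedPath.le_succ_of_adj hk.le le_rfl (by rwa [W.getVert_length])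
  omega

theorem nonempty_embedding (h : IsUndominatedAt W P i) (hhole : ¬ HasHole G) (hW : 3 ≤ W.length) :
    Nonempty (dominoGraph ↪g G) ∨ Nonempty (fGraph ↪g G) ∨ Nonempty (x5Graph ↪g G) := by
  have hi := h.add_two_le_length
  rcases hi.lt_or_eq with hlt | hlen
  · exact h.nonempty_embedding_of_lt hhole hlt
  · refine h.reverse.nonempty_embedding_of_lt hhole ?_
    have : ¬ P.length ≤ 2 := fun hP => absurd (h.length_le_two hhole hP) (by omega)
    rw [Walk.length_reverse]
    omega

end IsUndominatedAt

theorem exists_isUndominatedAt_of_not_dominates {V : Type*} {G : SimpleGraph V} {u v : V}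
    {W P : G.Walk u v} (hW : IsInducedPath G W) (hP : IsGeodesic P) (hWP : ¬ Dominates G W P) :
    ∃ i, IsUndominatedAt W P i := by
  simp only [Dominates, not_forall, not_or, not_exists, not_and] at hWP
  obtain ⟨x, hx, hxW, hxadj⟩ := hWP
  obtain ⟨k, hk₀, hk, rfl⟩ := mem_internals_iff.mp hx
  obtain ⟨i, rfl⟩ := Nat.exists_eq_add_one.mpr hk₀
  exact ⟨i, hW, hP, hk, hxW, hxadj⟩

theorem forbidden_free_m3_dominates_sp_general {V : Type*} {G : SimpleGraph V}
    (hhole : ¬ HasHole G) (hD : IsEmpty (dominoGraph ↪g G)) (hF : IsEmpty (fGraph ↪g G))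
    (hX : IsEmpty (x5Graph ↪g G)) {u v : V} {W P : G.Walk u v} (hW : IsInducedPath G W)
    (h3 : 3 ≤ W.length) (hP : P.length = G.dist u v) : Dominates G W P := by
  by_contra hWP
  obtain ⟨i, hi⟩ := exists_isUndominatedAt_of_not_dominates hW hP hWP
  rcases hi.nonempty_embedding hhole h3 with h | h | h
  · exact not_isEmpty_iff.mpr h hD
  · exact not_isEmpty_iff.mpr h hF
  · exact not_isEmpty_iff.mpr h hX

theorem forbidden_free_m3_dominates_sp {V : Type*} [Fintype V] (G : SimpleGraph V)
    (hc : G.Connected) (hhole : ¬ HasHole G)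
    (hD : IsEmpty (dominoGraph ↪g G)) (hF : IsEmpty (fGraph ↪g G))
    (hX : IsEmpty (x5Graph ↪g G))
    (u v : V) (huv : ¬ G.Adj u v) (W W' : G.Walk u v)
    (hW : IsInducedPath G W) (h3 : 3 ≤ W.length)
    (hW' : W'.IsPath) (hsp : W'.length = G.dist u v) :
    Dominates G W W' := by
  exact forbidden_free_m3_dominates_sp_general hhole hD hF hX hW h3 hsp
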